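/- arXiv:math/0610136 — 3 statements merged into one kernel-verified Lean document; each statement's English description precedes it below -/
import Mathlib

section
/- Let X and Y be topological, locally convex real vector spaces in duality via a duality product ⟨·,·⟩ : X × Y → ℝ whose topologies are compatible with the duality. A nonempty set M ⊆ X × Y is the graph M(b) = {(x,y) ∈ X × Y : b(x,y) = ⟨x,y⟩} of some bipotential b : X × Y → ℝ ∪ {+∞} if and only if M is a BB-graph, i.e. for every x in the domain of M the slice m(x) = {y ∈ Y : (x,y) ∈ M} is convex and closed, and for every y in the image of M the slice m*(y) = {x ∈ X : (x,y) ∈ M} is convex and closed. -/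
/-!
Statement 0 (Buliga, de Saxcé, Vallée, "Construction of bipotentials and a
minimax theorem of Fan", Theorem 3.4): a nonempty set `M ⊆ X × Y` is the graph
of a bipotential if and only if `M` is a BB-graph.
-/

noncomputable section

/-- The Fenchel conjugate of an `ℝ ∪ {+∞}`-valued function `φ` on `X`,
with respect to a duality pairing `p : X → Y → ℝ`. -/
def econj {X Y : Type*} (p : X → Y → ℝ) (φ : X → EReal) (y : Y) : EReal :=
  ⨆ x : X, ((p x y : EReal) - φ x)

/-- The subdifferential of an `ℝ ∪ {+∞}`-valued function `φ` at a point `x` of its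
domain, with respect to a duality pairing `p : X → Y → ℝ`:
`∂φ(x) = {u ∈ Y : ∀ z, ⟨z - x, u⟩ ≤ φ(z) - φ(x)}` (empty if `φ x = +∞`). -/
def eSubdiff {X Y : Type*} (p : X → Y → ℝ) (φ : X → EReal) (x : X) : Set Y :=
  {u : Y | φ x ≠ ⊤ ∧ ∀ z : X, φ x + ((p z u - p x u : ℝ) : EReal) ≤ φ z}

/-- Convexity of an `ℝ ∪ {+∞}`-valued function on a real vector space. -/
def EConvex {V : Type*} [AddCommGroup V] [Module ℝ V] (f : V → EReal) : Prop :=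
  ∀ z₁ z₂ : V, ∀ α β : ℝ, 0 ≤ α → 0 ≤ β → α + β = 1 →
    f (α • z₁ + β • z₂) ≤ (α : EReal) * f z₁ + (β : EReal) * f z₂

/-- `b : X × Y → ℝ ∪ {+∞}` is a bipotential for the pairing `p` if it is convex and
lower semicontinuous in each argument, satisfies `b(x,y) ≥ ⟨x,y⟩`, and for all `(x,y)`
the conditions `y ∈ ∂b(·,y)(x)`, `x ∈ ∂b(x,·)(y)`, `b(x,y) = ⟨x,y⟩` are equivalent. -/
def IsBipotential {X Y : Type*} [AddCommGroup X] [Module ℝ X] [TopologicalSpace X]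
    [AddCommGroup Y] [Module ℝ Y] [TopologicalSpace Y]
    (p : X → Y → ℝ) (b : X → Y → EReal) : Prop :=
  (∀ y, EConvex fun x => b x y) ∧
  (∀ x, EConvex fun y => b x y) ∧
  (∀ y, LowerSemicontinuous fun x => b x y) ∧
  (∀ x, LowerSemicontinuous fun y => b x y) ∧
  (∀ x y, ((p x y : ℝ) : EReal) ≤ b x y) ∧
  (∀ x y, (y ∈ eSubdiff p (fun x' => b x' y) x ↔ b x y = ((p x y : ℝ) : EReal)) ∧
          (x ∈ eSubdiff (fun v u => p u v) (fun y' => b x y') y ↔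
            b x y = ((p x y : ℝ) : EReal)))

theorem convex_isClosed_setOf_eq_linear {V : Type*} [AddCommGroup V] [Module ℝ V]
    [TopologicalSpace V] {f : V → EReal} (l : V →ₗ[ℝ] ℝ) (hl : Continuous l)
    (hconv : EConvex f) (hlsc : LowerSemicontinuous f) (hle : ∀ v, ((l v : ℝ) : EReal) ≤ f v) :
    Convex ℝ {v | f v = ((l v : ℝ) : EReal)} ∧ IsClosed {v | f v = ((l v : ℝ) : EReal)} := by
  constructor
  · intro u hu v hv α β hα hβ hαβ
    refine le_antisymm ((hconv u v α β hα hβ hαβ).trans ?_) (hle _)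
    rw [hu, hv, map_add, map_smul, map_smul, smul_eq_mul, smul_eq_mul]
    push_cast
    exact le_rfl
  · rw [← isOpen_compl_iff, isOpen_iff_mem_nhds]
    intro v hv
    obtain ⟨r, hr, hr'⟩ := EReal.lt_iff_exists_real_btwn.1 (lt_of_le_of_ne (hle v) (Ne.symm hv))
    filter_upwards [hlsc v r hr', hl.continuousAt.eventually_lt_const (EReal.coe_lt_coe_iff.1 hr)]
      with w hw hlw hEq
    exact absurd (hEq ▸ hw) (not_lt.2 (EReal.coe_le_coe_iff.2 hlw.le))

open Classical in
/-- The function equal to `l` on `S` and to `+∞` elsewhere. -/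
def restrictTop {V : Type*} (l : V → ℝ) (S : Set V) (v : V) : EReal :=
  if v ∈ S then ((l v : ℝ) : EReal) else ⊤

theorem coe_le_restrictTop {V : Type*} (l : V → ℝ) (S : Set V) (v : V) :
    ((l v : ℝ) : EReal) ≤ restrictTop l S v := by
  unfold restrictTop
  split_ifs
  · exact le_rfl
  · exact le_top

theorem restrictTop_eq_coe_iff {V : Type*} {l : V → ℝ} {S : Set V} {v : V} :
    restrictTop l S v = ((l v : ℝ) : EReal) ↔ v ∈ S := by
  unfold restrictTop
  split_ifs with h
  · simp [h]
  · simp [h]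

theorem restrictTop_ne_top_iff {V : Type*} {l : V → ℝ} {S : Set V} {v : V} :
    restrictTop l S v ≠ ⊤ ↔ v ∈ S := by
  unfold restrictTop
  split_ifs with h
  · simp [h]
  · simp [h]

theorem eConvex_restrictTop {V : Type*} [AddCommGroup V] [Module ℝ V] (l : V →ₗ[ℝ] ℝ)
    {S : Set V} (hS : Convex ℝ S) : EConvex (restrictTop l S) := by
  intro u v α β hα hβ hαβ
  rcases hα.eq_or_lt with rfl | hα'
  · obtain rfl : β = 1 := by linarith
    simp
  rcases hβ.eq_or_lt with rfl | hβ'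
  · obtain rfl : α = 1 := by linarith
    simp
  have hbot : ∀ (γ : ℝ) (w : V), 0 < γ → (γ : EReal) * restrictTop l S w ≠ ⊥ := by
    intro γ w hγ
    unfold restrictTop
    split_ifs
    · exact_mod_cast EReal.coe_ne_bot (γ * l w)
    · simp [EReal.coe_mul_top_of_pos hγ]
  by_cases hu : u ∈ S
  · by_cases hv : v ∈ S
    · rw [restrictTop_eq_coe_iff.2 hu, restrictTop_eq_coe_iff.2 hv,
        restrictTop_eq_coe_iff.2 (hS hu hv hα hβ hαβ), map_add, map_smul, map_smul,
        smul_eq_mul, smul_eq_mul]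
      push_cast
      exact le_rfl
    · have hv' : restrictTop l S v = ⊤ := not_not.1 (mt restrictTop_ne_top_iff.1 hv)
      rw [hv', EReal.coe_mul_top_of_pos hβ', EReal.add_top_of_ne_bot (hbot α u hα')]
      exact le_top
  · have hu' : restrictTop l S u = ⊤ := not_not.1 (mt restrictTop_ne_top_iff.1 hu)
    rw [hu', EReal.coe_mul_top_of_pos hα', EReal.top_add_of_ne_bot (hbot β v hβ')]
    exact le_top

theorem lowerSemicontinuous_restrictTop {V : Type*} [TopologicalSpace V] {l : V → ℝ}
    (hl : Continuous l) {S : Set V} (hS : IsClosed S) :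
    LowerSemicontinuous (restrictTop l S) := by
  intro v r hr
  by_cases hv : v ∈ S
  · rw [restrictTop_eq_coe_iff.2 hv] at hr
    filter_upwards [(continuous_coe_real_ereal.comp hl).continuousAt.eventually_const_lt hr]
      with w hw
    exact hw.trans_le (coe_le_restrictTop l S w)
  · filter_upwards [hS.isOpen_compl.mem_nhds hv] with w hw
    rw [not_not.1 (mt restrictTop_ne_top_iff.1 hv)] at hr
    rwa [not_not.1 (mt restrictTop_ne_top_iff.1 hw)]

theorem mem_eSubdiff_restrictTop_iff {X Y : Type*} (p : X → Y → ℝ) (S : Set X) (x : X) (y : Y) :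
    y ∈ eSubdiff p (restrictTop (fun x' => p x' y) S) x ↔ x ∈ S := by
  refine ⟨fun h => restrictTop_ne_top_iff.1 h.1, fun h => ⟨restrictTop_ne_top_iff.2 h, fun z => ?_⟩⟩
  rw [restrictTop_eq_coe_iff.2 h, ← EReal.coe_add, add_sub_cancel]
  exact coe_le_restrictTop (fun x' => p x' y) S z

/-- Let `X`, `Y` be locally convex topological real vector spaces in
duality via a bilinear pairing `p`, the topologies being compatible with the duality
(the pairing is separately continuous and every continuous linear functional is
represented by the pairing). A nonempty `M ⊆ X × Y` is the graph
`M(b) = {(x,y) : b(x,y) = ⟨x,y⟩}` of some bipotential `b` if and only if `M` is a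
BB-graph: all slices `m(x) = {y : (x,y) ∈ M}` for `x ∈ dom M` and
`m*(y) = {x : (x,y) ∈ M}` for `y ∈ im M` are convex and closed. -/
theorem bipotential_exists_iff_BBGraph {X Y : Type*}
    [AddCommGroup X] [Module ℝ X] [TopologicalSpace X] [IsTopologicalAddGroup X]
    [ContinuousSMul ℝ X] [LocallyConvexSpace ℝ X]
    [AddCommGroup Y] [Module ℝ Y] [TopologicalSpace Y] [IsTopologicalAddGroup Y]
    [ContinuousSMul ℝ Y] [LocallyConvexSpace ℝ Y]
    (p : X →ₗ[ℝ] Y →ₗ[ℝ] ℝ)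
    (hcX : ∀ y : Y, Continuous fun x : X => p x y)
    (hcY : ∀ x : X, Continuous fun y : Y => p x y)
    (hrX : ∀ ℓ : X →L[ℝ] ℝ, ∃ y : Y, ∀ x : X, ℓ x = p x y)
    (hrY : ∀ ℓ : Y →L[ℝ] ℝ, ∃ x : X, ∀ y : Y, ℓ y = p x y)
    (M : Set (X × Y)) (hM : M.Nonempty) :
    (∃ b : X → Y → EReal, IsBipotential (fun x y => p x y) b ∧
        M = {z : X × Y | b z.1 z.2 = ((p z.1 z.2 : ℝ) : EReal)}) ↔
      ((∀ x : X, (∃ y, (x, y) ∈ M) →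
          Convex ℝ {y : Y | (x, y) ∈ M} ∧ IsClosed {y : Y | (x, y) ∈ M}) ∧
       (∀ y : Y, (∃ x, (x, y) ∈ M) →
          Convex ℝ {x : X | (x, y) ∈ M} ∧ IsClosed {x : X | (x, y) ∈ M})) := by
  constructor
  · rintro ⟨b, ⟨hcx, hcy, hlx, hly, hle, -⟩, rfl⟩
    exact ⟨fun x _ => convex_isClosed_setOf_eq_linear (p x) (hcY x) (hcy x) (hly x) (hle x),
      fun y _ => convex_isClosed_setOf_eq_linear (p.flip y) (hcX y) (hcx y) (hlx y)
        fun x => hle x y⟩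
  · rintro ⟨hx, hy⟩
    have hx' : ∀ x, Convex ℝ {y : Y | (x, y) ∈ M} ∧ IsClosed {y : Y | (x, y) ∈ M} := by
      intro x
      rcases Set.eq_empty_or_nonempty {y : Y | (x, y) ∈ M} with h | h
      · rw [h]
        exact ⟨convex_empty, isClosed_empty⟩
      · exact hx x h
    have hy' : ∀ y, Convex ℝ {x : X | (x, y) ∈ M} ∧ IsClosed {x : X | (x, y) ∈ M} := by
      intro y
      rcases Set.eq_empty_or_nonempty {x : X | (x, y) ∈ M} with h | h
      · rw [h]
        exact ⟨convex_empty, isClosed_empty⟩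
      · exact hy y h
    refine ⟨fun x y => restrictTop (fun z : X × Y => p z.1 z.2) M (x, y),
      ⟨fun y => eConvex_restrictTop (p.flip y) (hy' y).1,
        fun x => eConvex_restrictTop (p x) (hx' x).1,
        fun y => lowerSemicontinuous_restrictTop (hcX y) (hy' y).2,
        fun x => lowerSemicontinuous_restrictTop (hcY x) (hx' x).2,
        fun x y => coe_le_restrictTop (fun z : X × Y => p z.1 z.2) M (x, y),
        fun x y => ⟨?_, ?_⟩⟩, ?_⟩
    · exact (mem_eSubdiff_restrictTop_iff (fun x y => p x y) {x' | (x', y) ∈ M} x y).trans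
        (restrictTop_eq_coe_iff (l := fun z : X × Y => p z.1 z.2)).symm
    · exact (mem_eSubdiff_restrictTop_iff (fun y x => p x y) {y' | (x, y') ∈ M} y x).trans
        (restrictTop_eq_coe_iff (l := fun z : X × Y => p z.1 z.2)).symm
    · ext z
      exact (restrictTop_eq_coe_iff (l := fun z : X × Y => p z.1 z.2)).symm
end
end

section
/- Let H be a real Hilbert space, with duality product equal to the inner product. Then the Cauchy bipotential b : H × H → ℝ, b(x,y) = ‖x‖·‖y‖, is a bipotential; moreover its graph M(b) = {(x,y) : ‖x‖·‖y‖ = ⟨x,y⟩} consists exactly of the pairs (x,y) such that x = 0, or y = 0, or y = λx for some λ > 0. -/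
/-!
Statement 5 (Buliga, de Saxcé, Vallée, Example 2): the Cauchy bipotential
`b(x,y) = ‖x‖ ‖y‖` on a real Hilbert space, and the description of its graph.
-/

noncomputable section

section CauchyBipotential

theorem eConvex_norm_mul_const {E : Type*} [NormedAddCommGroup E] [NormedSpace ℝ E] (c : ℝ)
    (hc : 0 ≤ c) : EConvex fun x : E => ((‖x‖ * c : ℝ) : EReal) := by
  intro z₁ z₂ α β hα hβ _
  have h : ‖α • z₁ + β • z₂‖ ≤ α * ‖z₁‖ + β * ‖z₂‖ := by
    simpa [norm_smul, abs_of_nonneg hα, abs_of_nonneg hβ] using norm_add_le (α • z₁) (β • z₂)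
  have h' : ‖α • z₁ + β • z₂‖ * c ≤ α * (‖z₁‖ * c) + β * (‖z₂‖ * c) := by
    linarith [mul_le_mul_of_nonneg_right h hc]
  beta_reduce
  exact_mod_cast h'

theorem lowerSemicontinuous_norm_mul_const {E : Type*} [NormedAddCommGroup E] (c : ℝ) :
    LowerSemicontinuous fun x : E => ((‖x‖ * c : ℝ) : EReal) :=
  (continuous_coe_real_ereal.comp (continuous_norm.mul continuous_const)).lowerSemicontinuous

variable {H : Type*} [NormedAddCommGroup H] [InnerProductSpace ℝ H]

theorem mem_eSubdiff_norm_mul_norm_iff (x y : H) :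
    y ∈ eSubdiff (fun x y : H => (inner ℝ x y : ℝ)) (fun z => ((‖z‖ * ‖y‖ : ℝ) : EReal)) x ↔
      ‖x‖ * ‖y‖ = inner ℝ x y := by
  constructor
  · rintro ⟨-, h⟩
    have h0 : ‖x‖ * ‖y‖ + (inner ℝ (0 : H) y - inner ℝ x y) ≤ ‖(0 : H)‖ * ‖y‖ := by
      have h := h 0
      beta_reduce at h
      exact_mod_cast h
    rw [inner_zero_left, norm_zero] at h0
    linarith [real_inner_le_norm x y]
  · intro h
    refine ⟨EReal.coe_ne_top _, fun z => ?_⟩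
    have hz : ‖x‖ * ‖y‖ + (inner ℝ z y - inner ℝ x y) ≤ ‖z‖ * ‖y‖ := by
      linarith [real_inner_le_norm z y]
    beta_reduce
    exact_mod_cast hz

theorem norm_mul_norm_eq_inner_iff (x y : H) :
    ‖x‖ * ‖y‖ = inner ℝ x y ↔ x = 0 ∨ y = 0 ∨ ∃ l : ℝ, 0 < l ∧ y = l • x := by
  rw [eq_comm, inner_eq_norm_mul_iff_real, ← sameRay_iff_norm_smul_eq.trans eq_comm]
  constructor
  · intro h
    by_cases hx : x = 0
    · exact .inl hx
    by_cases hy : y = 0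
    · exact .inr (.inl hy)
    obtain ⟨l, hl, h⟩ := h.exists_pos_left hx hy
    exact .inr (.inr ⟨l, hl, h.symm⟩)
  · rintro (rfl | rfl | ⟨l, hl, rfl⟩)
    · exact SameRay.zero_left _
    · exact SameRay.zero_right _
    · exact SameRay.sameRay_pos_smul_right x hl

end CauchyBipotential

/-- Let `H` be a real Hilbert space, the duality product being the
inner product. Then the Cauchy bipotential `b(x,y) = ‖x‖ ‖y‖` is a bipotential, and
its graph `M(b) = {(x,y) : ‖x‖ ‖y‖ = ⟨x,y⟩}` consists exactly of the pairs `(x,y)`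
with `x = 0`, or `y = 0`, or `y = λ x` for some `λ > 0`. -/
theorem cauchy_bipotential {H : Type*}
    [NormedAddCommGroup H] [InnerProductSpace ℝ H] [CompleteSpace H] :
    IsBipotential (fun x y : H => (inner ℝ x y : ℝ))
        (fun x y : H => ((‖x‖ * ‖y‖ : ℝ) : EReal)) ∧
      {z : H × H | ‖z.1‖ * ‖z.2‖ = (inner ℝ z.1 z.2 : ℝ)} =
        {z : H × H | z.1 = 0 ∨ z.2 = 0 ∨ ∃ l : ℝ, 0 < l ∧ z.2 = l • z.1} := by
  refine ⟨⟨fun y => eConvex_norm_mul_const _ (norm_nonneg y), fun x => ?_,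
    fun y => lowerSemicontinuous_norm_mul_const _, fun x => ?_,
    fun x y => EReal.coe_le_coe_iff.2 (real_inner_le_norm x y), fun x y => ⟨?_, ?_⟩⟩, ?_⟩
  · simpa only [mul_comm] using eConvex_norm_mul_const (E := H) _ (norm_nonneg x)
  · simpa only [mul_comm] using lowerSemicontinuous_norm_mul_const (E := H) ‖x‖
  · exact (mem_eSubdiff_norm_mul_norm_iff x y).trans EReal.coe_eq_coe_iff.symm
  · have h := mem_eSubdiff_norm_mul_norm_iff y x
    simp only [real_inner_comm, mul_comm ‖y‖] at h
    simpa only [real_inner_comm, mul_comm, EReal.coe_eq_coe_iff] using h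
  · ext z
    exact norm_mul_norm_eq_inner_iff z.1 z.2
end
end

section
/- Let H be a nonzero real Hilbert space and let M = {(x,y) ∈ H × H : ‖x‖·‖y‖ = ⟨x,y⟩} be the graph of the Cauchy bipotential b(x,y) = ‖x‖·‖y‖. Then M is not a monotone graph: there exist (x₁,y₁), (x₂,y₂) ∈ M with ⟨x₁ − x₂, y₁ − y₂⟩ < 0. In particular M is not cyclically monotone, hence there is no convex lower semicontinuous φ : H → ℝ ∪ {+∞} with M = {(x,y) : φ(x) + φ*(y) = ⟨x,y⟩}; i.e. M cannot be expressed by a separable bipotential. -/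
/-!
Statement 6 (Buliga, de Saxcé, Vallée): the graph of the Cauchy bipotential on a
nonzero real Hilbert space is not monotone, hence not cyclically monotone, hence
it is not the graph `M(φ) = {(x,y) : φ(x) + φ*(y) = ⟨x,y⟩}` of any convex lower
semicontinuous `φ : H → ℝ ∪ {+∞}`; i.e. it cannot be expressed by a separable
bipotential.
-/

noncomputable section

/-- A set `M ⊆ H × H` is cyclically monotone if for every finite cycle
`(x₀,y₀), (x₁,y₁), …, (x_n,y_n) = (x₀,y₀)` in `M` one has
`∑_{i=0}^{n-1} ⟨x_{i+1} − x_i, y_i⟩ ≤ 0`. -/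
def CyclicallyMonotone {H : Type*} [NormedAddCommGroup H] [InnerProductSpace ℝ H]
    (M : Set (H × H)) : Prop :=
  ∀ (n : ℕ) (z : ℕ → H × H), (∀ i ≤ n, z i ∈ M) → z n = z 0 →
    ∑ i ∈ Finset.range n, (inner ℝ ((z (i + 1)).1 - (z i).1) ((z i).2) : ℝ) ≤ 0

/-- A cyclically monotone set is monotone. -/
theorem CyclicallyMonotone.inner_sub_nonneg {H : Type*} [NormedAddCommGroup H]
    [InnerProductSpace ℝ H] {M : Set (H × H)} (hM : CyclicallyMonotone M) {z₁ z₂ : H × H}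
    (h₁ : z₁ ∈ M) (h₂ : z₂ ∈ M) : 0 ≤ (inner ℝ (z₁.1 - z₂.1) (z₁.2 - z₂.2) : ℝ) := by
  have h := hM 2 (fun i => if i = 1 then z₂ else z₁)
    (fun i _ => by split_ifs <;> assumption) (by simp)
  simp only [Finset.sum_range_succ, Finset.sum_range_zero, inner_sub_left] at h
  norm_num at h
  simp only [inner_sub_left, inner_sub_right]
  linarith

/-- The Fenchel–Young inequality for real values of the function and of its conjugate. -/
theorem le_add_of_econj_eq {X Y : Type*} {p : X → Y → ℝ} {φ : X → EReal} {x : X} {y : Y}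
    {a b : ℝ} (ha : φ x = a) (hb : econj p φ y = b) : p x y ≤ a + b := by
  have h : (p x y : EReal) - φ x ≤ econj p φ y :=
    le_iSup (fun x => (p x y : EReal) - φ x) x
  rw [ha, hb, ← EReal.coe_sub, EReal.coe_le_coe_iff] at h
  linarith

/-- If a sum of extended reals is real, then both summands are real. -/
theorem EReal.exists_coe_of_add_eq_coe {a b : EReal} {r : ℝ} (h : a + b = r) :
    ∃ s t : ℝ, a = s ∧ b = t ∧ s + t = r := by
  induction a <;> induction b <;> simp_all
  exact_mod_cast h

/-- The set where equality holds in the Fenchel–Young inequality is cyclically monotone. -/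
theorem cyclicallyMonotone_setOf_add_econj_eq {H : Type*} [NormedAddCommGroup H]
    [InnerProductSpace ℝ H] (φ : H → EReal) :
    CyclicallyMonotone {z : H × H | φ z.1 + econj (fun a b : H => (inner ℝ a b : ℝ)) φ z.2 =
      ((inner ℝ z.1 z.2 : ℝ) : EReal)} := by
  intro n z hz hzn
  have hreal : ∀ i ≤ n, ∃ s t : ℝ, φ (z i).1 = s ∧
      econj (fun a b : H => (inner ℝ a b : ℝ)) φ (z i).2 = t ∧
      s + t = (inner ℝ (z i).1 (z i).2 : ℝ) :=
    fun i hi => EReal.exists_coe_of_add_eq_coe (hz i hi)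
  have hstep : ∀ i ∈ Finset.range n, (inner ℝ ((z (i + 1)).1 - (z i).1) ((z i).2) : ℝ) ≤
      (φ (z (i + 1)).1).toReal - (φ (z i).1).toReal := by
    intro i hi
    have hi : i < n := Finset.mem_range.mp hi
    obtain ⟨s, t, hs, ht, hst⟩ := hreal i hi.le
    obtain ⟨s', -, hs', -⟩ := hreal (i + 1) hi
    have hle := le_add_of_econj_eq hs' ht
    rw [hs, hs', EReal.toReal_coe, EReal.toReal_coe, inner_sub_left]
    linarith
  refine (Finset.sum_le_sum hstep).trans ?_
  rw [Finset.sum_range_sub (fun i => (φ (z i).1).toReal), hzn, sub_self]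

/-- Let `H` be a nonzero real Hilbert space and
`M = {(x,y) : ‖x‖ ‖y‖ = ⟨x,y⟩}` the graph of the Cauchy bipotential. Then `M` is not
monotone: there are `(x₁,y₁), (x₂,y₂) ∈ M` with `⟨x₁ − x₂, y₁ − y₂⟩ < 0`. In
particular `M` is not cyclically monotone, and there is no convex lower
semicontinuous `φ : H → ℝ ∪ {+∞}` with `M = {(x,y) : φ(x) + φ*(y) = ⟨x,y⟩}`. -/
theorem cauchy_graph_not_monotone {H : Type*}
    [NormedAddCommGroup H] [InnerProductSpace ℝ H] [CompleteSpace H] [Nontrivial H] :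
    (∃ z₁ ∈ {z : H × H | ‖z.1‖ * ‖z.2‖ = (inner ℝ z.1 z.2 : ℝ)},
      ∃ z₂ ∈ {z : H × H | ‖z.1‖ * ‖z.2‖ = (inner ℝ z.1 z.2 : ℝ)},
        (inner ℝ (z₁.1 - z₂.1) (z₁.2 - z₂.2) : ℝ) < 0) ∧
    ¬ CyclicallyMonotone {z : H × H | ‖z.1‖ * ‖z.2‖ = (inner ℝ z.1 z.2 : ℝ)} ∧
    ¬ ∃ φ : H → EReal, EConvex φ ∧ LowerSemicontinuous φ ∧
        {z : H × H | ‖z.1‖ * ‖z.2‖ = (inner ℝ z.1 z.2 : ℝ)} =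
          {z : H × H | φ z.1 + econj (fun a b : H => (inner ℝ a b : ℝ)) φ z.2 =
            ((inner ℝ z.1 z.2 : ℝ) : EReal)} := by
  have hmono : ∃ z₁ ∈ {z : H × H | ‖z.1‖ * ‖z.2‖ = (inner ℝ z.1 z.2 : ℝ)},
      ∃ z₂ ∈ {z : H × H | ‖z.1‖ * ‖z.2‖ = (inner ℝ z.1 z.2 : ℝ)},
        (inner ℝ (z₁.1 - z₂.1) (z₁.2 - z₂.2) : ℝ) < 0 := by
    obtain ⟨e, he⟩ := exists_ne (0 : H)
    exact ⟨(e, 0), by simp, (0, e), by simp, by simpa using pow_pos (norm_pos_iff.mpr he) 2⟩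
  have hcyc : ¬ CyclicallyMonotone {z : H × H | ‖z.1‖ * ‖z.2‖ = (inner ℝ z.1 z.2 : ℝ)} := by
    obtain ⟨z₁, h₁, z₂, h₂, hlt⟩ := hmono
    exact fun h => (h.inner_sub_nonneg h₁ h₂).not_gt hlt
  refine ⟨hmono, hcyc, ?_⟩
  rintro ⟨φ, -, -, hφ⟩
  exact hcyc (hφ ▸ cyclicallyMonotone_setOf_add_econj_eq φ)
end
end
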